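/- arXiv:2505.15264 — 5 statements merged into one kernel-verified Lean document; each statement's English description precedes it below -/
import Mathlib

section
/- For every natural number n and every real y: ‖Γ(1/2 − n + iy)‖² = (π/cosh(πy)) · ∏_{k=1}^{n} ((k − 1/2)² + y²)^{−1}, where Γ is the complex Gamma function and ‖·‖ is the complex absolute value. -/
open Real Finset

/-!
On the line `re s = 1 / 2` the reflection `s ↦ 1 - s` is complex conjugation, so Euler's reflection
formula evaluates `Γ(s) * conj Γ(s) = ‖Γ(s)‖²`. The functional equation, applied `n` times, then
moves the evaluation to the line `re s = 1 / 2 - n`.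
-/

theorem one_sub_eq_conj_of_re_eq_half {s : ℂ} (hs : s.re = 1 / 2) :
    1 - s = starRingEnd ℂ s := by
  apply Complex.ext
  · rw [Complex.sub_re, Complex.one_re, Complex.conj_re, hs]
    norm_num
  · simp

theorem sin_pi_mul_half_add_I_mul (z : ℂ) :
    Complex.sin (π * (1 / 2 + Complex.I * z)) = Complex.cosh (π * z) := by
  have shift : (π : ℂ) * (1 / 2 + Complex.I * z) = π * z * Complex.I + π / 2 := by ring
  rw [shift, Complex.sin_add_pi_div_two, Complex.cos_mul_I]

theorem norm_Gamma_sq_of_re_eq_half {s : ℂ} (hs : s.re = 1 / 2) :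
    ‖Complex.Gamma s‖ ^ 2 = π / Real.cosh (π * s.im) := by
  have hs_eq : s = 1 / 2 + Complex.I * s.im := by
    apply Complex.ext <;> simp [hs]
  have hsin : Complex.sin (π * s) = Complex.cosh (π * s.im) := by
    conv_lhs => rw [hs_eq]
    exact sin_pi_mul_half_add_I_mul s.im
  have reflection : (‖Complex.Gamma s‖ : ℂ) ^ 2 = π / Complex.cosh (π * s.im) := by
    rw [← Complex.mul_conj', ← Complex.Gamma_conj, ← one_sub_eq_conj_of_re_eq_half hs,
      Complex.Gamma_mul_Gamma_one_sub, hsin]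
  exact_mod_cast reflection

theorem Gamma_sub_nat {s : ℂ} {n : ℕ} (hs : ∀ k ∈ Icc 1 n, s ≠ k) :
    Complex.Gamma (s - n) = Complex.Gamma s * ∏ k ∈ Icc 1 n, (s - k)⁻¹ := by
  induction n with
  | zero => simp
  | succ n ih =>
    have hne : s - (n + 1 : ℕ) ≠ 0 := sub_ne_zero.mpr (hs (n + 1) (by simp))
    have hs' : ∀ k ∈ Icc 1 n, s ≠ k := fun k hk ↦ hs k (Icc_subset_Icc_right n.le_succ hk)
    have functional_eq :
        Complex.Gamma (s - n) = (s - (n + 1 : ℕ)) * Complex.Gamma (s - (n + 1 : ℕ)) := by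
      rw [← Complex.Gamma_add_one _ hne]
      congr 1
      push_cast
      ring
    rw [prod_Icc_succ_top (by lia), ← mul_assoc, ← ih hs', functional_eq, mul_comm,
      inv_mul_cancel_left₀ hne]

theorem norm_Gamma_sub_nat_sq {s : ℂ} {n : ℕ} (hs : ∀ k ∈ Icc 1 n, s ≠ k) :
    ‖Complex.Gamma (s - n)‖ ^ 2 =
      ‖Complex.Gamma s‖ ^ 2 * ∏ k ∈ Icc 1 n, (((k : ℝ) - s.re) ^ 2 + s.im ^ 2)⁻¹ := by
  have norm_sub_sq (k : ℕ) : ‖s - k‖ ^ 2 = ((k : ℝ) - s.re) ^ 2 + s.im ^ 2 := by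
    rw [Complex.sq_norm, Complex.normSq_apply, Complex.sub_re, Complex.sub_im, Complex.natCast_re,
      Complex.natCast_im]
    ring
  simp only [Gamma_sub_nat hs, norm_mul, norm_prod, norm_inv, mul_pow, ← prod_pow, inv_pow,
    norm_sub_sq]

theorem ne_natCast_of_re_eq_half {s : ℂ} (hs : s.re = 1 / 2) (k : ℕ) : s ≠ k := by
  rintro rfl
  have two_mul_eq_one : 2 * (k : ℝ) = 1 := by
    rw [Complex.natCast_re] at hs
    linarith
  have : 2 * k = 1 := by exact_mod_cast two_mul_eq_one
  lia

/-- `|Γ(1/2 - n + iy)|² = (π / cosh(πy)) · ∏_{k=1}^{n} ((k - 1/2)² + y²)⁻¹`. -/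
theorem norm_Gamma_half_sub_nat_sq (n : ℕ) (y : ℝ) :
    ‖Complex.Gamma (1 / 2 - n + Complex.I * y)‖ ^ 2 =
      (π / Real.cosh (π * y)) *
        ∏ k ∈ Finset.Icc 1 n, (((k : ℝ) - 1 / 2) ^ 2 + y ^ 2)⁻¹ := by
  set s : ℂ := 1 / 2 + Complex.I * y with hs
  have hre : s.re = 1 / 2 := by simp [hs]
  have him : s.im = y := by simp [hs]
  rw [sub_add_eq_add_sub, ← hs, norm_Gamma_sub_nat_sq fun k _ ↦ ne_natCast_of_re_eq_half hre k,
    norm_Gamma_sq_of_re_eq_half hre, hre, him]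
end

section
/- For every real k > 0 and every integer μ ≥ 0: c_{k,μ}² ≤ k^{1−2μ}, and hence c_{k,μ} ≤ k^{1/2−μ}. In particular, for each fixed μ one has c_{k,μ} = O(k^{−μ+1/2}) as k → ∞, uniformly in μ. -/
open Real

/-- The square `c_{k,μ}²` of the Mehler–Fock normalization constant
(a positive real number; we take the real part of the defining complex expression). -/
noncomputable def mfConstSq (k : ℝ) (μ : ℕ) : ℝ :=
  (((k * Real.sinh (π * k) / π : ℝ) : ℂ) *
      Complex.Gamma (1 / 2 - μ + Complex.I * k) *
      Complex.Gamma (1 / 2 - μ - Complex.I * k)).re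

/-- The Mehler–Fock normalization constant `c_{k,μ}`, the positive square root of `c_{k,μ}²`. -/
noncomputable def mfConst (k : ℝ) (μ : ℕ) : ℝ := Real.sqrt (mfConstSq k μ)

/-!
For real `k` the two Gamma factors of `c_{k,μ}²` are complex conjugates, so
`c_{k,μ}² = (k sinh(πk) / π) |Γ(1/2 - μ + ik)|²`. The functional equation `Γ(s + 1) = s Γ(s)` and
`|Im s| ≤ |s|` show that each shift of the argument by `-1` costs at most a factor `1 / |Im s|`, and
after `μ` shifts back the reflection formula gives `|Γ(1/2 + ik)|² = π / cosh(πk)`. Therefore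
`k^{2μ} c_{k,μ}² ≤ k tanh(πk) ≤ k`.
-/

open scoped ComplexConjugate

theorem Gamma_mul_Gamma_conj (s : ℂ) :
    Complex.Gamma s * Complex.Gamma (conj s) = ((‖Complex.Gamma s‖ ^ 2 : ℝ) : ℂ) := by
  rw [Complex.Gamma_conj, Complex.mul_conj']
  norm_cast

theorem abs_im_mul_norm_Gamma_le (s : ℂ) :
    |s.im| * ‖Complex.Gamma s‖ ≤ ‖Complex.Gamma (s + 1)‖ := by
  rcases eq_or_ne s 0 with rfl | hs
  · simp
  · rw [Complex.Gamma_add_one s hs, norm_mul]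
    gcongr
    exact Complex.abs_im_le_norm s

theorem abs_im_pow_mul_norm_Gamma_sub_natCast_le (s : ℂ) (n : ℕ) :
    |s.im| ^ n * ‖Complex.Gamma (s - n)‖ ≤ ‖Complex.Gamma s‖ := by
  induction n with
  | zero => simp
  | succ n ih =>
    have shift : |s.im| * ‖Complex.Gamma (s - (n + 1 : ℕ))‖ ≤ ‖Complex.Gamma (s - n)‖ := by
      have h := abs_im_mul_norm_Gamma_le (s - (n + 1 : ℕ))
      rwa [show s - (n + 1 : ℕ) + 1 = s - n by push_cast; ring, Complex.sub_im,
        Complex.natCast_im, sub_zero] at h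
    calc |s.im| ^ (n + 1) * ‖Complex.Gamma (s - (n + 1 : ℕ))‖
        = |s.im| ^ n * (|s.im| * ‖Complex.Gamma (s - (n + 1 : ℕ))‖) := by ring
      _ ≤ |s.im| ^ n * ‖Complex.Gamma (s - n)‖ := by gcongr
      _ ≤ ‖Complex.Gamma s‖ := ih

theorem norm_Gamma_half_add_I_mul_sq (t : ℝ) :
    ‖Complex.Gamma (1 / 2 + Complex.I * t)‖ ^ 2 = π / Real.cosh (π * t) := by
  have conj_eq : conj (1 / 2 + Complex.I * t : ℂ) = 1 - (1 / 2 + Complex.I * t) := by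
    simp only [map_add, map_div₀, map_one, map_ofNat, map_mul, Complex.conj_I, Complex.conj_ofReal]
    ring
  have sin_eq : Complex.sin (π * (1 / 2 + Complex.I * t)) = (Real.cosh (π * t) : ℂ) := by
    rw [show (π : ℂ) * (1 / 2 + Complex.I * t) = (π * t : ℝ) * Complex.I + π / 2 by push_cast; ring,
      Complex.sin_add_pi_div_two, Complex.cos_mul_I, Complex.ofReal_cosh]
  apply Complex.ofReal_injective
  rw [← Gamma_mul_Gamma_conj, conj_eq, Complex.Gamma_mul_Gamma_one_sub, sin_eq, Complex.ofReal_div]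

theorem mfConstSq_eq_mul_norm_Gamma_sq (k : ℝ) (μ : ℕ) :
    mfConstSq k μ =
      k * Real.sinh (π * k) / π * ‖Complex.Gamma (1 / 2 + Complex.I * k - μ)‖ ^ 2 := by
  have conj_eq : conj (1 / 2 + Complex.I * k - μ : ℂ) = 1 / 2 - μ - Complex.I * k := by
    simp only [map_sub, map_add, map_div₀, map_one, map_ofNat, map_natCast, map_mul,
      Complex.conj_I, Complex.conj_ofReal]
    ring
  rw [mfConstSq, mul_assoc, ← conj_eq, sub_add_eq_add_sub, Gamma_mul_Gamma_conj,
    ← Complex.ofReal_mul, Complex.ofReal_re]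

theorem mul_sinh_mul_nonneg {a : ℝ} (ha : 0 ≤ a) (x : ℝ) : 0 ≤ x * Real.sinh (a * x) := by
  rcases le_total 0 x with hx | hx
  · exact mul_nonneg hx (Real.sinh_nonneg_iff.2 (mul_nonneg ha hx))
  · exact mul_nonneg_of_nonpos_of_nonpos hx
      (Real.sinh_nonpos_iff.2 (mul_nonpos_of_nonneg_of_nonpos ha hx))

theorem pow_mul_mfConstSq_le_mul_tanh (k : ℝ) (μ : ℕ) :
    k ^ (2 * μ) * mfConstSq k μ ≤ k * Real.tanh (π * k) := by
  have prefactor_nonneg : 0 ≤ k * Real.sinh (π * k) / π :=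
    div_nonneg (mul_sinh_mul_nonneg pi_nonneg k) pi_nonneg
  have shift : |k| ^ μ * ‖Complex.Gamma (1 / 2 + Complex.I * k - μ)‖ ≤
      ‖Complex.Gamma (1 / 2 + Complex.I * k)‖ := by
    simpa using abs_im_pow_mul_norm_Gamma_sub_natCast_le (1 / 2 + Complex.I * k) μ
  calc k ^ (2 * μ) * mfConstSq k μ
      = k * Real.sinh (π * k) / π *
          (|k| ^ μ * ‖Complex.Gamma (1 / 2 + Complex.I * k - μ)‖) ^ 2 := by
        rw [mfConstSq_eq_mul_norm_Gamma_sq, pow_mul, ← sq_abs k]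
        ring
    _ ≤ k * Real.sinh (π * k) / π * ‖Complex.Gamma (1 / 2 + Complex.I * k)‖ ^ 2 := by gcongr
    _ = k * Real.tanh (π * k) := by
        rw [norm_Gamma_half_add_I_mul_sq, Real.tanh_eq_sinh_div_cosh]
        field_simp

theorem mfConstSq_le_rpow {k : ℝ} (hk : 0 < k) (μ : ℕ) :
    mfConstSq k μ ≤ k ^ ((1 : ℝ) - 2 * μ) := by
  have exponent : k ^ ((1 : ℝ) - 2 * μ) = k / k ^ (2 * μ) := by
    rw [← Nat.cast_ofNat, ← Nat.cast_mul, Real.rpow_sub_natCast hk.ne', Real.rpow_one]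
  rw [exponent, le_div_iff₀' (by positivity)]
  calc k ^ (2 * μ) * mfConstSq k μ
      ≤ k * Real.tanh (π * k) := pow_mul_mfConstSq_le_mul_tanh k μ
    _ ≤ k := mul_le_of_le_one_right hk.le (Real.tanh_lt_one _).le

/-- For `k > 0` and integer `μ ≥ 0`: `c_{k,μ}² ≤ k^{1-2μ}` and `c_{k,μ} ≤ k^{1/2-μ}`;
in particular `c_{k,μ} = O(k^{-μ+1/2})` as `k → ∞`, uniformly in `μ`. -/
theorem mfConst_le (k : ℝ) (hk : 0 < k) (μ : ℕ) :
    mfConstSq k μ ≤ k ^ ((1 : ℝ) - 2 * μ) ∧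
    mfConst k μ ≤ k ^ ((1 : ℝ) / 2 - μ) := by
  refine ⟨mfConstSq_le_rpow hk μ, ?_⟩
  calc mfConst k μ ≤ √(k ^ ((1 : ℝ) - 2 * μ)) := Real.sqrt_le_sqrt (mfConstSq_le_rpow hk μ)
    _ = k ^ ((1 : ℝ) / 2 - μ) := by
        rw [Real.sqrt_eq_rpow, ← Real.rpow_mul hk.le]
        ring_nf
end

section
/- For every real k > 0 and every integer μ ≥ 0, the function x ↦ E(k,μ,x) is twice differentiable on (0,∞) and satisfies the Pöschl–Teller eigenfunction equation −(d²/dx²)E(k,μ,x) + ((μ² − 1/4)/sinh²x)·E(k,μ,x) = k²·E(k,μ,x) for all x > 0. -/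
open Real

/-- The Gauss hypergeometric series `₂F₁(a,b,c;z)`. -/
noncomputable def hyp2F1 (a b c z : ℂ) : ℂ :=
  ∑' n : ℕ, (ascPochhammer ℂ n).eval a * (ascPochhammer ℂ n).eval b /
      ((ascPochhammer ℂ n).eval c * (n.factorial : ℂ)) * z ^ n

/-- `E(k,μ,x) = 2^{-μ} (tanh x)^{μ+1/2} (cosh x)^{-ik} (1/μ!)
  ₂F₁((μ+1/2+ik)/2, (μ+3/2+ik)/2, μ+1; tanh² x)`,
the weighted conical associated Legendre function `√(sinh x) 𝖯^{-μ}_{ik-1/2}(cosh x)`. -/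
noncomputable def legE (k : ℝ) (μ : ℕ) (x : ℝ) : ℂ :=
  (2 : ℂ) ^ (-(μ : ℂ)) * ((Real.tanh x ^ ((μ : ℝ) + 1 / 2) : ℝ) : ℂ) *
    ((Real.cosh x : ℂ) ^ (-(Complex.I * k))) * ((μ.factorial : ℂ))⁻¹ *
    hyp2F1 (((μ : ℂ) + 1 / 2 + Complex.I * k) / 2)
      (((μ : ℂ) + 3 / 2 + Complex.I * k) / 2) ((μ : ℂ) + 1)
      ((Real.tanh x ^ 2 : ℝ) : ℂ)

/-!
The regularized function `F = ₂F₁(a, b; c; ·) / Γ(c)` satisfies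
`F' = a b F(a + 1, b + 1; c + 1; ·)`, and comparing coefficients gives Gauss's equation
`z(1 - z)F'' + (c - (a + b + 1)z)F' - a b F = 0` in the unit disc, for every complex `c`.
Write `u = w · F(tanh² x)` with `w = 2^{-μ} (tanh x)^{μ + 1/2} (cosh x)^{-ik}` and `φ = w'/w`.
Then `φ' + φ² = (μ² - 1/4)/sinh² x - k² - 4ab/cosh² x`, so `u'' - ((μ² - 1/4)/sinh² x - k²)u`
equals `4w/cosh² x` times the left-hand side of Gauss's equation at `z = tanh² x`, for
`a = (μ + 1/2 + ik)/2`, `b = a + 1/2`, `c = μ + 1`.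
-/

section PowerSeries

variable {𝕜 F : Type*} [NontriviallyNormedField 𝕜]
  [NormedAddCommGroup F] [NormedSpace 𝕜 F] [CompleteSpace F]

theorem hasDerivAt_sum_of_enorm_lt_radius {p : FormalMultilinearSeries 𝕜 𝕜 F} {z : 𝕜}
    (hz : ‖z‖ₑ < p.radius) :
    HasDerivAt p.sum (∑' n : ℕ, z ^ n • (n + 1) • p.coeff (n + 1)) z := by
  have hmem : z ∈ Metric.eball (0 : 𝕜) p.derivSeries.radius := by
    simpa using hz.trans_le p.radius_le_radius_derivSeries
  have hsum : HasSum (fun n ↦ z ^ n • (n + 1) • p.coeff (n + 1)) (p.derivSeries.sum z 1) := by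
    simpa using (p.derivSeries.hasSum hmem).mapL (ContinuousLinearMap.apply 𝕜 F (1 : 𝕜))
  rw [hsum.tsum_eq]
  exact (FormalMultilinearSeries.hasFDerivAt_sum hz).hasDerivAt

theorem hasSum_natCast_mul_mul_pow {R : Type*} [CommRing R] [TopologicalSpace R]
    [IsTopologicalRing R] {f : ℕ → R} {z s : R}
    (h : HasSum (fun n : ℕ ↦ (n + 1) * f (n + 1) * z ^ n) s) :
    HasSum (fun n : ℕ ↦ n * f n * z ^ n) (z * s) := by
  rw [← hasSum_nat_add_iff' 1]
  simpa [pow_succ', mul_left_comm] using h.mul_left z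

end PowerSeries

section Hypergeometric

open Complex

variable (a b c : ℂ) {z : ℂ}

theorem coeff_regularizedGaussHGFunSeries_succ_eq_shift (n : ℕ) :
    (n + 1) * (regularizedGaussHGFunSeries a b c).coeff (n + 1) =
      a * b * (regularizedGaussHGFunSeries (a + 1) (b + 1) (c + 1)).coeff n := by
  have hn : (n : ℂ) + 1 ≠ 0 := n.cast_add_one_ne_zero
  simp only [coeff_regularizedGaussHGFunSeries, ascPochhammer_succ_left, Nat.factorial_succ,
    Polynomial.eval_mul, Polynomial.eval_X, Polynomial.eval_comp, Polynomial.eval_add,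
    Polynomial.eval_one, Nat.cast_mul, Nat.cast_add, Nat.cast_one, add_right_comm c 1, ← add_assoc]
  field_simp

theorem coeff_regularizedGaussHGFunSeries_succ (n : ℕ) :
    (c + n) * ((n + 1) * (regularizedGaussHGFunSeries a b c).coeff (n + 1)) =
      (a + n) * (b + n) * (regularizedGaussHGFunSeries a b c).coeff n := by
  have hn : (n : ℂ) + 1 ≠ 0 := n.cast_add_one_ne_zero
  have hGamma := one_div_Gamma_eq_self_mul_one_div_Gamma_add_one (c + n)
  simp only [coeff_regularizedGaussHGFunSeries, ascPochhammer_succ_eval, Nat.factorial_succ,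
    Nat.cast_mul, Nat.cast_add, Nat.cast_one, ← add_assoc, div_eq_mul_inv, mul_inv, hGamma]
  field_simp

theorem enorm_lt_radius_regularizedGaussHGFunSeries (hz : ‖z‖ < 1) :
    ‖z‖ₑ < (regularizedGaussHGFunSeries a b c).radius := by
  refine lt_of_lt_of_le ?_ (radius_regularizedGaussHGFunSeries_ge_one a b c)
  rwa [← ofReal_norm, ENNReal.ofReal_lt_one]

theorem hasSum_regularizedGaussHGFun (hz : ‖z‖ < 1) :
    HasSum (fun n ↦ (regularizedGaussHGFunSeries a b c).coeff n * z ^ n)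
      (regularizedGaussHGFun a b c z) := by
  have hmem : z ∈ Metric.eball (0 : ℂ) (regularizedGaussHGFunSeries a b c).radius := by
    simpa using enorm_lt_radius_regularizedGaussHGFunSeries a b c hz
  simpa [mul_comm, regularizedGaussHGFun] using (regularizedGaussHGFunSeries a b c).hasSum hmem

theorem hasDerivAt_regularizedGaussHGFun (hz : ‖z‖ < 1) :
    HasDerivAt (regularizedGaussHGFun a b c)
      (a * b * regularizedGaussHGFun (a + 1) (b + 1) (c + 1) z) z := by
  refine (hasDerivAt_sum_of_enorm_lt_radius
    (enorm_lt_radius_regularizedGaussHGFunSeries a b c hz)).congr_deriv ?_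
  refine (((hasSum_regularizedGaussHGFun _ _ _ hz).mul_left (a * b)).congr_fun fun n ↦ ?_).tsum_eq
  rw [← mul_assoc, ← coeff_regularizedGaussHGFunSeries_succ_eq_shift]
  simp [mul_comm]

theorem hasSum_natCast_mul_regularizedGaussHGFun (hz : ‖z‖ < 1) :
    HasSum (fun n ↦ n * (regularizedGaussHGFunSeries a b c).coeff n * z ^ n)
      (z * (a * b * regularizedGaussHGFun (a + 1) (b + 1) (c + 1) z)) := by
  refine hasSum_natCast_mul_mul_pow ?_
  simpa only [coeff_regularizedGaussHGFunSeries_succ_eq_shift, mul_assoc] using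
    (hasSum_regularizedGaussHGFun (a + 1) (b + 1) (c + 1) hz).mul_left (a * b)

theorem hasSum_natCast_sq_mul_regularizedGaussHGFun (hz : ‖z‖ < 1) :
    HasSum (fun n : ℕ ↦ n * (n * (regularizedGaussHGFunSeries a b c).coeff n) * z ^ n)
      (z * (a * b * (z * ((a + 1) * (b + 1) *
          regularizedGaussHGFun (a + 1 + 1) (b + 1 + 1) (c + 1 + 1) z) +
        regularizedGaussHGFun (a + 1) (b + 1) (c + 1) z))) := by
  refine hasSum_natCast_mul_mul_pow ?_
  refine (((hasSum_natCast_mul_regularizedGaussHGFun _ _ _ hz).add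
    (hasSum_regularizedGaussHGFun _ _ _ hz)).mul_left (a * b)).congr_fun fun n ↦ ?_
  push_cast
  rw [coeff_regularizedGaussHGFunSeries_succ_eq_shift]
  ring

theorem regularizedGaussHGFun_ode (hz : ‖z‖ < 1) :
    z * (1 - z) * (a * b * ((a + 1) * (b + 1) *
        regularizedGaussHGFun (a + 1 + 1) (b + 1 + 1) (c + 1 + 1) z)) +
      (c - (a + b + 1) * z) * (a * b * regularizedGaussHGFun (a + 1) (b + 1) (c + 1) z) -
      a * b * regularizedGaussHGFun a b c z = 0 := by
  -- With `θ = z d/dz`, the equation reads `(θ + c)F' = (θ + a)(θ + b)F`.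
  have hleft := ((hasSum_natCast_mul_regularizedGaussHGFun (a + 1) (b + 1) (c + 1) hz).add
    ((hasSum_regularizedGaussHGFun (a + 1) (b + 1) (c + 1) hz).mul_left c)).mul_left (a * b)
  have hright := ((hasSum_natCast_sq_mul_regularizedGaussHGFun a b c hz).add
    ((hasSum_natCast_mul_regularizedGaussHGFun a b c hz).mul_left (a + b))).add
    ((hasSum_regularizedGaussHGFun a b c hz).mul_left (a * b))
  have heq := hleft.unique (hright.congr_fun fun n ↦ ?_)
  · linear_combination heq
  · linear_combination z ^ n * coeff_regularizedGaussHGFunSeries_succ a b c n -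
      z ^ n * (c + n) * coeff_regularizedGaussHGFunSeries_succ_eq_shift a b c n

theorem hyp2F1_eq_ordinaryHypergeometric :
    hyp2F1 a b c z = ordinaryHypergeometric a b c z := by
  rw [ordinaryHypergeometric_eq_tsum]
  refine tsum_congr fun n ↦ ?_
  simp only [smul_eq_mul, mul_inv, div_eq_mul_inv]
  ring

theorem inv_factorial_mul_hyp2F1 (m : ℕ) :
    (m.factorial : ℂ)⁻¹ * hyp2F1 a b (m + 1) z = regularizedGaussHGFun a b (m + 1) z := by
  have hpole (n : ℕ) : (m + 1 : ℂ) ≠ -n := fun h ↦ by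
    have hsum : (m + 1 + n : ℂ) = 0 := by rw [h, neg_add_cancel]
    norm_cast at hsum
    lia
  rw [← ordinaryHypergeometric_div_Gamma_eq hpole, Complex.Gamma_nat_eq_factorial,
    hyp2F1_eq_ordinaryHypergeometric, div_eq_inv_mul]

end Hypergeometric

section Calculus

theorem hasDerivAt_mul_of_logDeriv {𝕜 A : Type*} [NontriviallyNormedField 𝕜] [NormedCommRing A]
    [NormedAlgebra 𝕜 A] {w g : 𝕜 → A} {φ g' : A} {x : 𝕜}
    (hw : HasDerivAt w (φ * w x) x) (hg : HasDerivAt g g' x) :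
    HasDerivAt (fun y ↦ w y * g y) (w x * (φ * g x + g')) x :=
  (hw.mul hg).congr_deriv (by ring)

theorem hasDerivAt_cpow_const_real {f : ℝ → ℂ} {f' s : ℂ} {x : ℝ} (hf : HasDerivAt f f' x)
    (hfx : f x ∈ Complex.slitPlane) :
    HasDerivAt (fun y ↦ f y ^ s) (s * (f' / f x) * f x ^ s) x := by
  have hcomp := HasDerivAt.comp x ((hasDerivAt_id (f x)).cpow_const (c := s) hfx) hf
  refine hcomp.congr_deriv ?_
  have hne : f x ≠ 0 := Complex.slitPlane_ne_zero hfx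
  simp only [id, Complex.cpow_sub _ _ hne, Complex.cpow_one]
  ring

theorem hasDerivAt_tanh (x : ℝ) : HasDerivAt Real.tanh (1 - Real.tanh x ^ 2) x := by
  have hcosh : Real.cosh x ≠ 0 := (Real.cosh_pos x).ne'
  have hdiv := (Real.hasDerivAt_sinh x).div (Real.hasDerivAt_cosh x) hcosh
  rw [show Real.tanh = Real.sinh / Real.cosh from funext Real.tanh_eq_sinh_div_cosh]
  refine hdiv.congr_deriv ?_
  simp only [Pi.div_apply]
  field_simp

theorem hasDerivAt_ofReal_tanh (x : ℝ) :
    HasDerivAt (fun y : ℝ ↦ (Real.tanh y : ℂ)) (1 - (Real.tanh x : ℂ) ^ 2) x :=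
  (hasDerivAt_tanh x).ofReal_comp.congr_deriv (by push_cast; rfl)

theorem tanh_pos {x : ℝ} (hx : 0 < x) : 0 < Real.tanh x := by
  rw [Real.tanh_eq_sinh_div_cosh]
  exact div_pos (Real.sinh_pos_iff.2 hx) (Real.cosh_pos x)

theorem ofReal_tanh_ne_zero {x : ℝ} (hx : x ≠ 0) : (Real.tanh x : ℂ) ≠ 0 := by
  rw [Real.tanh_eq_sinh_div_cosh, Complex.ofReal_ne_zero]
  exact div_ne_zero (Real.sinh_ne_zero.2 hx) (Real.cosh_pos x).ne'

theorem norm_ofReal_tanh_sq_lt_one (x : ℝ) : ‖(Real.tanh x : ℂ) ^ 2‖ < 1 := by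
  rw [← Complex.ofReal_pow, Complex.norm_real, Real.norm_of_nonneg (sq_nonneg _)]
  exact Real.tanh_sq_lt_one x

theorem inv_sinh_sq {x : ℝ} (hx : x ≠ 0) :
    (Real.sinh x ^ 2)⁻¹ = (1 - Real.tanh x ^ 2) / Real.tanh x ^ 2 := by
  have hcosh : Real.cosh x ≠ 0 := (Real.cosh_pos x).ne'
  have hsinh : Real.sinh x ≠ 0 := Real.sinh_ne_zero.2 hx
  rw [Real.tanh_eq_sinh_div_cosh]
  field_simp
  rw [Real.cosh_sq]
  ring

theorem hasDerivAt_comp_tanh_sq {f : ℂ → ℂ} {f' : ℂ} {x : ℝ}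
    (hf : HasDerivAt f f' ((Real.tanh x : ℂ) ^ 2)) :
    HasDerivAt (fun y : ℝ ↦ f ((Real.tanh y : ℂ) ^ 2))
      (2 * Real.tanh x * (1 - (Real.tanh x : ℂ) ^ 2) * f') x :=
  (hf.comp x ((hasDerivAt_ofReal_tanh x).pow 2)).congr_deriv (by push_cast; ring)

theorem hasDerivAt_deriv_comp_tanh_sq {f' : ℂ → ℂ} {f'' : ℂ} {x : ℝ}
    (hf' : HasDerivAt f' f'' ((Real.tanh x : ℂ) ^ 2)) :
    HasDerivAt (fun y : ℝ ↦ 2 * Real.tanh y * (1 - (Real.tanh y : ℂ) ^ 2) *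
        f' ((Real.tanh y : ℂ) ^ 2))
      (2 * (1 - (Real.tanh x : ℂ) ^ 2) * ((1 - 3 * (Real.tanh x : ℂ) ^ 2) *
        f' ((Real.tanh x : ℂ) ^ 2) + 2 * (Real.tanh x : ℂ) ^ 2 * (1 - (Real.tanh x : ℂ) ^ 2) * f''))
      x := by
  have htanh := hasDerivAt_ofReal_tanh x
  refine (((htanh.const_mul 2).mul ((htanh.fun_pow 2).const_sub 1)).mul
    (hasDerivAt_comp_tanh_sq hf')).congr_deriv ?_
  simp only [Pi.mul_apply, Nat.cast_ofNat, Nat.add_one_sub_one, pow_one]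
  ring

end Calculus

section PoschlTeller

/-- `u` is twice differentiable on `(0, ∞)` and is there an eigenfunction, with eigenvalue `k²`, of
the Pöschl–Teller operator `-d²/dx² + (μ² - 1/4)/sinh² x`. The coupling `μ` and the spectral
parameter `k` may be complex; nothing is required of `u` on `(-∞, 0]`. -/
structure IsPoschlTellerEigenfunction (k μ : ℂ) (u : ℝ → ℂ) : Prop where
  differentiableAt : ∀ x > 0, DifferentiableAt ℝ u x
  differentiableAt_deriv : ∀ x > 0, DifferentiableAt ℝ (deriv u) x
  ode : ∀ x > 0,
    -deriv (deriv u) x + (μ ^ 2 - 1 / 4) / (Real.sinh x : ℂ) ^ 2 * u x = k ^ 2 * u x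

namespace IsPoschlTellerEigenfunction

variable {k μ : ℂ} {u u' u'' v : ℝ → ℂ}

theorem of_hasDerivAt (hu : ∀ x > 0, HasDerivAt u (u' x) x)
    (hu' : ∀ x > 0, HasDerivAt u' (u'' x) x)
    (hode : ∀ x > 0, -u'' x + (μ ^ 2 - 1 / 4) / (Real.sinh x : ℂ) ^ 2 * u x = k ^ 2 * u x) :
    IsPoschlTellerEigenfunction k μ u := by
  have hderiv : ∀ x > 0, HasDerivAt (deriv u) (u'' x) x := fun x hx ↦
    (hu' x hx).congr_of_eventuallyEq <| by
      filter_upwards [lt_mem_nhds hx] with y hy using (hu y hy).deriv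
  exact ⟨fun x hx ↦ (hu x hx).differentiableAt, fun x hx ↦ (hderiv x hx).differentiableAt,
    fun x hx ↦ by rw [(hderiv x hx).deriv, hode x hx]⟩

theorem congr (hu : IsPoschlTellerEigenfunction k μ u) (h : Set.EqOn v u (Set.Ioi 0)) :
    IsPoschlTellerEigenfunction k μ v := by
  have hvu : ∀ x > 0, v =ᶠ[nhds x] u := fun x hx ↦ h.eventuallyEq_of_mem (Ioi_mem_nhds hx)
  refine ⟨fun x hx ↦ (hu.differentiableAt x hx).congr_of_eventuallyEq (hvu x hx),
    fun x hx ↦ (hu.differentiableAt_deriv x hx).congr_of_eventuallyEq (hvu x hx).deriv,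
    fun x hx ↦ ?_⟩
  rw [(hvu x hx).deriv.deriv_eq, h hx, hu.ode x hx]

end IsPoschlTellerEigenfunction

/-- The elementary factor `2^{-μ} (tanh x)^{μ + 1/2} (cosh x)^{-ik}` of `conicalE`, with principal
complex powers, so that it is smooth only on `(0, ∞)` in general. -/
noncomputable def conicalWeight (k μ : ℂ) (x : ℝ) : ℂ :=
  2 ^ (-μ) * (Real.tanh x : ℂ) ^ (μ + 1 / 2) * (Real.cosh x : ℂ) ^ (-(Complex.I * k))

/-- The logarithmic derivative `(μ + 1/2)(coth x - tanh x) - ik tanh x` of `conicalWeight k μ` on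
`(0, ∞)`. -/
noncomputable def conicalWeightLogDeriv (k μ : ℂ) (x : ℝ) : ℂ :=
  (μ + 1 / 2) * ((Real.tanh x : ℂ)⁻¹ - Real.tanh x) - Complex.I * k * Real.tanh x

section ConicalWeight

variable (k μ : ℂ) {x : ℝ}

theorem hasDerivAt_conicalWeight (hx : 0 < x) :
    HasDerivAt (conicalWeight k μ) (conicalWeightLogDeriv k μ x * conicalWeight k μ x) x := by
  have hT : (Real.tanh x : ℂ) ≠ 0 := ofReal_tanh_ne_zero hx.ne'
  have htanh := hasDerivAt_cpow_const_real (s := μ + 1 / 2) (hasDerivAt_ofReal_tanh x)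
    (Complex.ofReal_mem_slitPlane.2 (tanh_pos hx))
  have hcosh := hasDerivAt_cpow_const_real (s := -(Complex.I * k))
    (Real.hasDerivAt_cosh x).ofReal_comp (Complex.ofReal_mem_slitPlane.2 (Real.cosh_pos x))
  refine ((htanh.const_mul (2 ^ (-μ))).mul hcosh).congr_deriv ?_
  rw [conicalWeightLogDeriv, conicalWeight, ← Complex.ofReal_div, ← Real.tanh_eq_sinh_div_cosh]
  field_simp
  ring

theorem conicalWeightLogDeriv_mul_tanh (hx : x ≠ 0) :
    conicalWeightLogDeriv k μ x * Real.tanh x =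
      (μ + 1 / 2) * (1 - (Real.tanh x : ℂ) ^ 2) - Complex.I * k * (Real.tanh x : ℂ) ^ 2 := by
  have hT : (Real.tanh x : ℂ) ≠ 0 := ofReal_tanh_ne_zero hx
  rw [conicalWeightLogDeriv]
  field_simp

theorem hasDerivAt_conicalWeightLogDeriv (hx : x ≠ 0) :
    HasDerivAt (conicalWeightLogDeriv k μ)
      ((μ ^ 2 - 1 / 4) / (Real.sinh x : ℂ) ^ 2 - k ^ 2 -
        (μ + 1 / 2 + Complex.I * k) * (μ + 3 / 2 + Complex.I * k) * (1 - (Real.tanh x : ℂ) ^ 2) -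
        conicalWeightLogDeriv k μ x ^ 2) x := by
  have hT : (Real.tanh x : ℂ) ≠ 0 := ofReal_tanh_ne_zero hx
  have hsinh : ((Real.sinh x : ℂ) ^ 2)⁻¹ =
      (1 - (Real.tanh x : ℂ) ^ 2) / (Real.tanh x : ℂ) ^ 2 := mod_cast inv_sinh_sq hx
  have htanh := hasDerivAt_ofReal_tanh x
  refine ((((htanh.fun_inv hT).sub htanh).const_mul (μ + 1 / 2)).sub
    (htanh.const_mul (Complex.I * k))).congr_deriv ?_
  rw [div_eq_mul_inv _ ((Real.sinh x : ℂ) ^ 2), hsinh, conicalWeightLogDeriv]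
  field_simp
  linear_combination (16 * k ^ 2 * (Real.tanh x : ℂ) ^ 2) * Complex.I_sq

theorem isPoschlTellerEigenfunction_conicalWeight_mul_comp_tanh_sq {f f' f'' : ℂ → ℂ}
    (hf : ∀ z, ‖z‖ < 1 → HasDerivAt f (f' z) z) (hf' : ∀ z, ‖z‖ < 1 → HasDerivAt f' (f'' z) z)
    (hode : ∀ z, ‖z‖ < 1 →
      z * (1 - z) * f'' z + (μ + 1 - (μ + 2 + Complex.I * k) * z) * f' z -
        (μ + 1 / 2 + Complex.I * k) / 2 * ((μ + 3 / 2 + Complex.I * k) / 2) * f z = 0) :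
    IsPoschlTellerEigenfunction k μ
      fun x ↦ conicalWeight k μ x * f ((Real.tanh x : ℂ) ^ 2) := by
  have hg x := hasDerivAt_comp_tanh_sq (hf _ (norm_ofReal_tanh_sq_lt_one x))
  have hg' x := hasDerivAt_deriv_comp_tanh_sq (hf' _ (norm_ofReal_tanh_sq_lt_one x))
  refine .of_hasDerivAt
    (fun x hx ↦ hasDerivAt_mul_of_logDeriv (hasDerivAt_conicalWeight k μ hx) (hg x))
    (fun x hx ↦ hasDerivAt_mul_of_logDeriv (hasDerivAt_conicalWeight k μ hx)
      (((hasDerivAt_conicalWeightLogDeriv k μ hx.ne').mul (hg x)).add (hg' x))) fun x hx ↦ ?_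
  have hφT := conicalWeightLogDeriv_mul_tanh k μ hx.ne'
  linear_combination (-4 * (1 - (Real.tanh x : ℂ) ^ 2) * conicalWeight k μ x) *
    (hode _ (norm_ofReal_tanh_sq_lt_one x) + f' ((Real.tanh x : ℂ) ^ 2) * hφT)

end ConicalWeight

/-- The function `legE` for complex `k` and `μ`. The factor `1/μ!` becomes the `1/Γ(μ + 1)` inside
the regularized hypergeometric function, so negative integers `μ` need no exclusion. -/
noncomputable def conicalE (k μ : ℂ) (x : ℝ) : ℂ :=
  conicalWeight k μ x * Complex.regularizedGaussHGFun ((μ + 1 / 2 + Complex.I * k) / 2)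
    ((μ + 3 / 2 + Complex.I * k) / 2) (μ + 1) ((Real.tanh x : ℂ) ^ 2)

theorem test_general (k μ : ℂ) : IsPoschlTellerEigenfunction k μ (conicalE k μ) := by
  refine isPoschlTellerEigenfunction_conicalWeight_mul_comp_tanh_sq k μ
    (fun z hz ↦ hasDerivAt_regularizedGaussHGFun _ _ _ hz)
    (fun z hz ↦ (hasDerivAt_regularizedGaussHGFun _ _ _ hz).const_mul _) fun z hz ↦ ?_
  linear_combination regularizedGaussHGFun_ode ((μ + 1 / 2 + Complex.I * k) / 2)
    ((μ + 3 / 2 + Complex.I * k) / 2) (μ + 1) hz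

theorem legE_eqOn_conicalE (k : ℝ) (μ : ℕ) : Set.EqOn (legE k μ) (conicalE k μ) (Set.Ioi 0) := by
  intro x hx
  rw [legE, conicalE, conicalWeight, mul_assoc _ (μ.factorial : ℂ)⁻¹, inv_factorial_mul_hyp2F1,
    Complex.ofReal_cpow (tanh_pos hx).le]
  push_cast
  rfl

end PoschlTeller

theorem test (k : ℝ) (hk : 0 < k) (μ : ℕ) :
    (∀ x > 0, DifferentiableAt ℝ (fun t : ℝ => legE k μ t) x) ∧
    (∀ x > 0, DifferentiableAt ℝ (deriv fun t : ℝ => legE k μ t) x) ∧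
    ∀ x > 0,
      -(deriv (deriv fun t : ℝ => legE k μ t) x) +
          ((((μ : ℝ) ^ 2 - 1 / 4) / Real.sinh x ^ 2 : ℝ) : ℂ) * legE k μ x =
        ((k ^ 2 : ℝ) : ℂ) * legE k μ x := by
  have h := (test_general k μ).congr (legE_eqOn_conicalE k μ)
  exact ⟨h.differentiableAt, h.differentiableAt_deriv, fun x hx ↦ by simpa using h.ode x hx⟩
end

section
/- Let μ ≥ 0 be an integer, x > 0 real, and k ≥ 1 real (if μ ≥ 1, any real k > 0 is allowed). Then ‖Γ(1/2+μ+ik)/Γ(1/2−μ+ik)‖·‖E(k,μ,x)‖ ≤ (sinh x)^{μ+1/2} / ‖Γ(−1/2−μ+ik)‖. (Equivalently, |√(sinh x)·𝖯^{μ}_{ik−1/2}(cosh x)| ≤ (sinh x)^{μ+1/2}/|Γ(ik − 1/2 − μ)|.) -/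
open Real

/-!
With `a = μ + 1/2 + ik`, integrating the binomial series of `(1 - t cos θ)^{-a}` against
`sin^{2μ} θ` over `[0, π]` gives
`₂F₁(a/2, (a+1)/2; μ+1; t²) · ∫₀^π sin^{2μ} θ dθ = ∫₀^π (1 - t cos θ)^{-a} sin^{2μ} θ dθ`.
Taking absolute values replaces `a` by its real part. For the resulting positive parameters
`(Re a + 1)/2 ≤ μ + 1`, so the series is dominated termwise by that of `(1 - t²)^{-Re a/2}`; at
`t = tanh x` this is `(cosh x)^{μ+1/2}`, whence `2^μ μ! |E(k,μ,x)| ≤ (sinh x)^{μ+1/2}`.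
Since `Γ(1/2-μ+ik) = (-1/2-μ+ik) Γ(-1/2-μ+ik)`, there remains
`|Γ(1/2+μ+ik)| ≤ |-1/2-μ+ik| 2^μ μ!`. For `μ ≥ 1` this follows from `|Γ(s)| ≤ Γ(Re s)`, and for
`μ = 0` from `|Γ(1/2+ik)|² = π / cosh (πk)`.
-/

section Pochhammer

theorem ascPochhammer_eval_two_mul {K : Type*} [Field K] [CharZero K] (a : K) (n : ℕ) :
    (ascPochhammer K (2 * n)).eval a =
      4 ^ n * ((ascPochhammer K n).eval (a / 2) * (ascPochhammer K n).eval ((a + 1) / 2)) := by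
  induction n with
  | zero => simp
  | succ n ih =>
    rw [show 2 * (n + 1) = 2 * n + 1 + 1 by ring]
    simp only [ascPochhammer_succ_eval, ih]
    push_cast
    ring

theorem ascPochhammer_eval_ofReal (r : ℝ) (n : ℕ) :
    (ascPochhammer ℂ n).eval (r : ℂ) = ((ascPochhammer ℝ n).eval r : ℝ) := by
  rw [← ascPochhammer_map Complex.ofRealHom n]
  exact Polynomial.eval_map_apply Complex.ofRealHom r

theorem norm_ascPochhammer_eval_le {A : Type*} [SeminormedRing A] [NormOneClass A] {a : A} {r : ℝ}
    (h : ‖a‖ ≤ r) (n : ℕ) : ‖(ascPochhammer A n).eval a‖ ≤ (ascPochhammer ℝ n).eval r := by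
  induction n with
  | zero => simp
  | succ n ih =>
    have hfactor : ‖a + n‖ ≤ r + n :=
      (norm_add_le _ _).trans (add_le_add h (by simpa using Nat.norm_cast_le (α := A) n))
    rw [ascPochhammer_succ_eval, ascPochhammer_succ_eval]
    exact norm_mul_le_of_le ih hfactor

theorem ringChoose_eq_ascPochhammer_eval_div {K : Type*} [Field K] [CharZero K] (a : K) (n : ℕ) :
    Ring.choose (a + n - 1) n = (ascPochhammer K n).eval a / n.factorial := by
  rw [← Ring.multichoose_eq, eq_div_iff (by exact_mod_cast n.factorial_ne_zero), mul_comm,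
    ← nsmul_eq_mul, Ring.factorial_nsmul_multichoose_eq_ascPochhammer,
    Polynomial.ascPochhammer_smeval_eq_eval]

theorem hasSum_one_sub_cpow_neg (a : ℂ) {z : ℂ} (hz : ‖z‖ < 1) :
    HasSum (fun n : ℕ => (ascPochhammer ℂ n).eval a / n.factorial * z ^ n) ((1 - z) ^ (-a)) := by
  have h := (Complex.one_div_one_sub_cpow_hasFPowerSeriesOnBall_zero a).hasSum (y := z)
    (by simpa [enorm_eq_nnnorm, ← NNReal.coe_lt_coe] using hz)
  simpa [ringChoose_eq_ascPochhammer_eval_div, FormalMultilinearSeries.ofScalars,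
    Complex.cpow_neg, mul_comm] using h

theorem hasSum_one_sub_rpow_neg (a : ℝ) {z : ℝ} (hz : |z| < 1) :
    HasSum (fun n : ℕ => (ascPochhammer ℝ n).eval a / n.factorial * z ^ n) ((1 - z) ^ (-a)) := by
  have h := (Real.one_div_one_sub_rpow_hasFPowerSeriesOnBall_zero a).hasSum (y := z)
    (by simpa [enorm_eq_nnnorm, ← NNReal.coe_lt_coe] using hz)
  have hnonneg : 0 ≤ 1 - z := by linarith [le_abs_self z]
  simpa [ringChoose_eq_ascPochhammer_eval_div, FormalMultilinearSeries.ofScalars,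
    Real.rpow_neg hnonneg, mul_comm] using h

end Pochhammer

theorem norm_hyp2F1_le_one_sub_rpow {a b z : ℂ} {c : ℝ} (hc : 0 < c) (hbc : ‖b‖ ≤ c)
    (hz : ‖z‖ < 1) : ‖hyp2F1 a b c z‖ ≤ (1 - ‖z‖) ^ (-‖a‖) := by
  refine tsum_of_norm_bounded (hasSum_one_sub_rpow_neg ‖a‖ (by rwa [abs_norm])) fun n => ?_
  have hcpos : 0 < (ascPochhammer ℝ n).eval c := ascPochhammer_pos n c hc
  have hcnorm : ‖(ascPochhammer ℂ n).eval (c : ℂ)‖ = (ascPochhammer ℝ n).eval c := by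
    rw [ascPochhammer_eval_ofReal, Complex.norm_real, Real.norm_of_nonneg hcpos.le]
  have ha := norm_ascPochhammer_eval_le (le_refl ‖a‖) n
  have hb := norm_ascPochhammer_eval_le hbc n
  rw [norm_mul, norm_div, norm_mul, norm_mul, norm_pow, hcnorm, RCLike.norm_natCast]
  refine mul_le_mul_of_nonneg_right ?_ (by positivity)
  calc ‖(ascPochhammer ℂ n).eval a‖ * ‖(ascPochhammer ℂ n).eval b‖ /
        ((ascPochhammer ℝ n).eval c * n.factorial)
      ≤ (ascPochhammer ℝ n).eval ‖a‖ * (ascPochhammer ℝ n).eval c /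
        ((ascPochhammer ℝ n).eval c * n.factorial) := by
        gcongr
        exact (norm_nonneg _).trans ha
    _ = (ascPochhammer ℝ n).eval ‖a‖ / n.factorial := by field_simp

/-- The `n`-th moment of `cos θ` on `[0, π]` with respect to the weight `sin ^ m θ`. -/
noncomputable def cosMoment (m n : ℕ) : ℝ := ∫ θ in (0 : ℝ)..π, cos θ ^ n * sin θ ^ m

section CosMoment

variable (m n : ℕ)

theorem cosMoment_zero_pos : 0 < cosMoment m 0 := by
  simpa [cosMoment] using integral_sin_pow_pos m

theorem hasDerivAt_cos_pow_mul_sin_pow (θ : ℝ) :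
    HasDerivAt (fun θ : ℝ => cos θ ^ (n + 1) * sin θ ^ (m + 1))
      ((n + 2 + m) * (cos θ ^ (n + 2) * sin θ ^ m) - (n + 1) * (cos θ ^ n * sin θ ^ m)) θ := by
  refine (((hasDerivAt_cos θ).fun_pow (n + 1)).mul
    ((hasDerivAt_sin θ).fun_pow (m + 1))).congr_deriv ?_
  simp only [Nat.add_sub_cancel]
  push_cast
  linear_combination -((n + 1) * cos θ ^ n * sin θ ^ m) * sin_sq_add_cos_sq θ

theorem cosMoment_add_two : (n + 2 + m) * cosMoment m (n + 2) = (n + 1) * cosMoment m n := by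
  have hFTC := intervalIntegral.integral_eq_sub_of_hasDerivAt
    (fun θ (_ : θ ∈ Set.uIcc 0 π) => hasDerivAt_cos_pow_mul_sin_pow m n θ)
    (Continuous.intervalIntegrable (by fun_prop) _ _)
  rw [intervalIntegral.integral_sub (Continuous.intervalIntegrable (by fun_prop) _ _)
    (Continuous.intervalIntegrable (by fun_prop) _ _), intervalIntegral.integral_const_mul,
    intervalIntegral.integral_const_mul] at hFTC
  simpa [cosMoment, sub_eq_zero] using hFTC

theorem cosMoment_odd : cosMoment m (2 * n + 1) = 0 := by
  have h := integral_sin_pow_mul_cos_pow_odd (a := 0) (b := π) m n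
  rw [sin_zero, sin_pi, intervalIntegral.integral_same] at h
  simpa only [cosMoment, mul_comm] using h

theorem cosMoment_even_mul :
    cosMoment m (2 * n) * (4 ^ n * ((ascPochhammer ℝ n).eval ((m : ℝ) / 2 + 1) * n.factorial)) =
      (2 * n).factorial * cosMoment m 0 := by
  induction n with
  | zero => simp
  | succ n ih =>
    have hrec := cosMoment_add_two m (2 * n)
    rw [show 2 * (n + 1) = 2 * n + 2 by ring, Nat.factorial_succ, Nat.factorial_succ (2 * n + 1),
      Nat.factorial_succ, ascPochhammer_succ_eval]
    push_cast at hrec ⊢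
    linear_combination (2 * (n + 1) * (4 ^ n *
      ((ascPochhammer ℝ n).eval ((m : ℝ) / 2 + 1) * n.factorial))) * hrec +
      (2 * (n + 1) * (2 * n + 1)) * ih

end CosMoment

section IntegralRepresentation

variable (a : ℂ) (m : ℕ) {t : ℝ}

theorem abs_mul_cos_lt_one (ht : |t| < 1) (θ : ℝ) : |t * cos θ| < 1 :=
  (abs_mul t _).trans_lt (mul_lt_one_of_nonneg_of_lt_one_left (abs_nonneg t) ht (abs_cos_le_one θ))

theorem hasSum_mul_cosMoment (ht : |t| < 1) :
    HasSum (fun n : ℕ => (ascPochhammer ℂ n).eval a / n.factorial * t ^ n * cosMoment m n)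
      (∫ θ in (0 : ℝ)..π, ((1 - t * cos θ : ℝ) : ℂ) ^ (-a) * ((sin θ ^ m : ℝ) : ℂ)) := by
  set coeff : ℕ → ℂ := fun n => (ascPochhammer ℂ n).eval a / n.factorial
  have hpointwise (θ : ℝ) : HasSum
      (fun n : ℕ => coeff n * ((t * cos θ : ℝ) : ℂ) ^ n * ((sin θ ^ m : ℝ) : ℂ))
      (((1 - t * cos θ : ℝ) : ℂ) ^ (-a) * ((sin θ ^ m : ℝ) : ℂ)) := by
    have h := (hasSum_one_sub_cpow_neg a (z := ((t * cos θ : ℝ) : ℂ))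
      (by simpa only [Complex.norm_real, Real.norm_eq_abs] using abs_mul_cos_lt_one ht θ)).mul_right
      ((sin θ ^ m : ℝ) : ℂ)
    rwa [← Complex.ofReal_one, ← Complex.ofReal_sub] at h
  have hdominated (n : ℕ) (θ : ℝ) :
      ‖coeff n * ((t * cos θ : ℝ) : ℂ) ^ n * ((sin θ ^ m : ℝ) : ℂ)‖ ≤ ‖coeff n‖ * |t| ^ n := by
    rw [mul_assoc, norm_mul, norm_mul, norm_pow, Complex.norm_real, Complex.norm_real,
      Real.norm_eq_abs, Real.norm_eq_abs, abs_pow, abs_mul, mul_pow, mul_assoc]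
    gcongr
    exact mul_le_of_le_one_right (by positivity) (mul_le_one₀
      (pow_le_one₀ (abs_nonneg _) (abs_cos_le_one θ)) (by positivity)
      (pow_le_one₀ (abs_nonneg _) (abs_sin_le_one θ)))
  have hsummable : Summable fun n => ‖coeff n‖ * |t| ^ n := by
    simpa [coeff] using
      (hasSum_one_sub_cpow_neg a (z := t) (by simpa using ht)).summable.norm
  have hintegral := intervalIntegral.hasSum_integral_of_dominated_convergence
    (μ := MeasureTheory.volume) (a := 0) (b := π) (fun n _ => ‖coeff n‖ * |t| ^ n)
    (fun n => Continuous.aestronglyMeasurable (by fun_prop))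
    (fun n => .of_forall fun θ _ => hdominated n θ) (.of_forall fun _ _ => hsummable)
    (by simp) (.of_forall fun θ _ => hpointwise θ)
  refine hintegral.congr_fun fun n => ?_
  rw [cosMoment, ← intervalIntegral.integral_ofReal, ← intervalIntegral.integral_const_mul]
  refine intervalIntegral.integral_congr fun θ _ => ?_
  push_cast
  ring

theorem cosMoment_zero_mul_hyp2F1_term (n : ℕ) :
    (cosMoment m 0 : ℂ) *
      ((ascPochhammer ℂ n).eval (a / 2) * (ascPochhammer ℂ n).eval ((a + 1) / 2) /
        ((ascPochhammer ℂ n).eval ((m : ℂ) / 2 + 1) * n.factorial) * ((t ^ 2 : ℝ) : ℂ) ^ n) =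
    (ascPochhammer ℂ (2 * n)).eval a / (2 * n).factorial * t ^ (2 * n) * cosMoment m (2 * n) := by
  have hmoment := congrArg ((↑) : ℝ → ℂ) (cosMoment_even_mul m n)
  have hcast := ascPochhammer_eval_ofReal ((m : ℝ) / 2 + 1) n
  push_cast at hmoment hcast
  rw [← hcast] at hmoment
  have hpoch : (ascPochhammer ℂ n).eval ((m : ℂ) / 2 + 1) ≠ 0 := by
    rw [hcast]
    exact_mod_cast (ascPochhammer_pos n ((m : ℝ) / 2 + 1) (by positivity)).ne'
  have hfact (j : ℕ) : (j.factorial : ℂ) ≠ 0 := by exact_mod_cast j.factorial_ne_zero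
  have hfact_n := hfact n
  have hfact_two_mul := hfact (2 * n)
  rw [ascPochhammer_eval_two_mul]
  generalize (ascPochhammer ℂ n).eval ((m : ℂ) / 2 + 1) = P at hpoch hmoment
  push_cast
  field_simp
  linear_combination -((ascPochhammer ℂ n).eval (a / 2) * (ascPochhammer ℂ n).eval ((a + 1) / 2) *
    (t : ℂ) ^ (2 * n)) * hmoment

theorem cosMoment_zero_mul_hyp2F1 (ht : |t| < 1) :
    (cosMoment m 0 : ℂ) * hyp2F1 (a / 2) ((a + 1) / 2) ((m : ℂ) / 2 + 1) ((t ^ 2 : ℝ) : ℂ) =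
      ∫ θ in (0 : ℝ)..π, ((1 - t * cos θ : ℝ) : ℂ) ^ (-a) * ((sin θ ^ m : ℝ) : ℂ) := by
  have hinj : Function.Injective (2 * · : ℕ → ℕ) := mul_right_injective₀ two_ne_zero
  have heven := (hinj.hasSum_iff fun n hn => ?_).mpr (hasSum_mul_cosMoment a m ht)
  · rw [← heven.tsum_eq, hyp2F1, ← tsum_mul_left]
    exact tsum_congr (cosMoment_zero_mul_hyp2F1_term a m)
  · obtain ⟨j, rfl | rfl⟩ := Nat.even_or_odd' n
    · exact absurd ⟨j, rfl⟩ hn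
    · simp [cosMoment_odd]

theorem norm_hyp2F1_le_norm_hyp2F1_re (ht : |t| < 1) :
    ‖hyp2F1 (a / 2) ((a + 1) / 2) ((m : ℂ) / 2 + 1) ((t ^ 2 : ℝ) : ℂ)‖ ≤
      ‖hyp2F1 ((a.re : ℂ) / 2) ((a.re + 1) / 2) ((m : ℂ) / 2 + 1) ((t ^ 2 : ℝ) : ℂ)‖ := by
  have hpos (θ : ℝ) : 0 < 1 - t * cos θ :=
    sub_pos.mpr ((le_abs_self _).trans_lt (abs_mul_cos_lt_one ht θ))
  have hreal : (∫ θ in (0 : ℝ)..π, ((1 - t * cos θ : ℝ) : ℂ) ^ (-(a.re : ℂ)) *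
      ((sin θ ^ m : ℝ) : ℂ)) =
      ((∫ θ in (0 : ℝ)..π, (1 - t * cos θ) ^ (-a.re) * sin θ ^ m : ℝ) : ℂ) := by
    rw [← intervalIntegral.integral_ofReal]
    refine intervalIntegral.integral_congr fun θ _ => ?_
    simp only [Complex.ofReal_mul, Complex.ofReal_cpow (hpos θ).le, Complex.ofReal_neg]
  have hcont : Continuous fun θ : ℝ => (1 - t * cos θ) ^ (-a.re) * sin θ ^ m :=
    (Continuous.rpow_const (by fun_prop) fun θ => .inl (hpos θ).ne').mul (by fun_prop)
  have hmoment : (cosMoment m 0 : ℂ) ≠ 0 := by exact_mod_cast (cosMoment_zero_pos m).ne'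
  refine le_of_mul_le_mul_left ?_ (norm_pos_iff.mpr hmoment)
  rw [← norm_mul, ← norm_mul, cosMoment_zero_mul_hyp2F1 a m ht,
    cosMoment_zero_mul_hyp2F1 (a.re : ℂ) m ht, hreal, Complex.norm_real]
  refine (intervalIntegral.norm_integral_le_of_norm_le pi_pos.le (.of_forall fun θ hθ => ?_)
    (hcont.intervalIntegrable _ _)).trans (le_abs_self _)
  have hsin : 0 ≤ sin θ := sin_nonneg_of_nonneg_of_le_pi hθ.1.le hθ.2
  rw [norm_mul, Complex.norm_cpow_eq_rpow_re_of_pos (hpos θ), Complex.norm_real,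
    Real.norm_of_nonneg (pow_nonneg hsin m), Complex.neg_re]

variable {a m} in
theorem norm_hyp2F1_quadratic_le (ha : 0 ≤ a.re) (ham : a.re ≤ m + 1) (ht : |t| < 1) :
    ‖hyp2F1 (a / 2) ((a + 1) / 2) ((m : ℂ) / 2 + 1) ((t ^ 2 : ℝ) : ℂ)‖ ≤
      (1 - t ^ 2) ^ (-(a.re / 2)) := by
  refine (norm_hyp2F1_le_norm_hyp2F1_re a m ht).trans ?_
  have hnorm_a : ‖(a.re : ℂ) / 2‖ = a.re / 2 := by
    rw [norm_div, Complex.norm_real, Real.norm_of_nonneg ha, Complex.norm_ofNat]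
  have hnorm_z : ‖((t ^ 2 : ℝ) : ℂ)‖ = t ^ 2 := by
    rw [Complex.norm_real, Real.norm_of_nonneg (sq_nonneg t)]
  have hnorm_b : ‖((a.re : ℂ) + 1) / 2‖ ≤ (m : ℝ) / 2 + 1 := by
    rw [norm_div, ← Complex.ofReal_one, ← Complex.ofReal_add, Complex.norm_real,
      Real.norm_of_nonneg (by positivity), Complex.norm_ofNat]
    linarith
  have h := norm_hyp2F1_le_one_sub_rpow (a := (a.re : ℂ) / 2) (by positivity) hnorm_b
    (hnorm_z.trans_lt ((sq_lt_one_iff_abs_lt_one t).mpr ht))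
  rw [hnorm_a, hnorm_z] at h
  simpa only [Complex.ofReal_add, Complex.ofReal_div, Complex.ofReal_natCast, Complex.ofReal_ofNat,
    Complex.ofReal_one] using h

end IntegralRepresentation

section LegE

theorem one_sub_tanh_sq (x : ℝ) : 1 - tanh x ^ 2 = (cosh x ^ 2)⁻¹ := by
  have := cosh_pos x
  rw [tanh_eq_sinh_div_cosh]
  field_simp
  linarith [cosh_sq x]

theorem one_sub_tanh_sq_rpow (x s : ℝ) : (1 - tanh x ^ 2) ^ (-(s / 2)) = cosh x ^ s := by
  rw [one_sub_tanh_sq, Real.inv_rpow (sq_nonneg _), Real.rpow_neg (sq_nonneg _), inv_inv,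
    ← Real.rpow_natCast_mul (cosh_pos x).le]
  congr 1
  push_cast
  ring

theorem norm_hyp2F1_legE_le (k : ℝ) (μ : ℕ) (x : ℝ) :
    ‖hyp2F1 (((μ : ℂ) + 1 / 2 + Complex.I * k) / 2) (((μ : ℂ) + 3 / 2 + Complex.I * k) / 2)
      ((μ : ℂ) + 1) ((tanh x ^ 2 : ℝ) : ℂ)‖ ≤ cosh x ^ ((μ : ℝ) + 1 / 2) := by
  have hre : ((μ : ℂ) + 1 / 2 + Complex.I * k).re = μ + 1 / 2 := by simp
  have h := norm_hyp2F1_quadratic_le (a := (μ : ℂ) + 1 / 2 + Complex.I * k) (m := 2 * μ)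
    (by rw [hre]; positivity)
    (by rw [hre]; push_cast; linarith [μ.cast_nonneg (α := ℝ)]) (abs_tanh_lt_one x)
  rw [hre, one_sub_tanh_sq_rpow] at h
  convert h using 3
  · ring
  · push_cast
    ring

theorem norm_legE_le (k : ℝ) (μ : ℕ) {x : ℝ} (hx : 0 ≤ x) :
    ‖legE k μ x‖ ≤ ((2 : ℝ) ^ μ * μ.factorial)⁻¹ * sinh x ^ ((μ : ℝ) + 1 / 2) := by
  have hcosh : 0 < cosh x := cosh_pos x
  have htanh : 0 ≤ tanh x := by
    rw [tanh_eq_sinh_div_cosh]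
    exact div_nonneg (sinh_nonneg_iff.mpr hx) hcosh.le
  have hcpow : ‖(cosh x : ℂ) ^ (-(Complex.I * k))‖ = 1 := by
    rw [Complex.norm_cpow_eq_rpow_re_of_pos hcosh]
    simp
  have hsinh : tanh x ^ ((μ : ℝ) + 1 / 2) * cosh x ^ ((μ : ℝ) + 1 / 2) =
      sinh x ^ ((μ : ℝ) + 1 / 2) := by
    rw [← Real.mul_rpow htanh hcosh.le, tanh_eq_sinh_div_cosh, div_mul_cancel₀ _ hcosh.ne']
  calc ‖legE k μ x‖
      = ((2 : ℝ) ^ μ * μ.factorial)⁻¹ * (tanh x ^ ((μ : ℝ) + 1 / 2) *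
          ‖hyp2F1 (((μ : ℂ) + 1 / 2 + Complex.I * k) / 2) (((μ : ℂ) + 3 / 2 + Complex.I * k) / 2)
            ((μ : ℂ) + 1) ((tanh x ^ 2 : ℝ) : ℂ)‖) := by
        rw [legE, norm_mul, norm_mul, norm_mul, norm_mul, hcpow, Complex.norm_real,
          Real.norm_of_nonneg (by positivity), Complex.cpow_neg, Complex.cpow_natCast, norm_inv,
          norm_inv, norm_pow, Complex.norm_ofNat, Complex.norm_natCast]
        ring
    _ ≤ ((2 : ℝ) ^ μ * μ.factorial)⁻¹ *
          (tanh x ^ ((μ : ℝ) + 1 / 2) * cosh x ^ ((μ : ℝ) + 1 / 2)) := by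
        gcongr
        exact norm_hyp2F1_legE_le k μ x
    _ = ((2 : ℝ) ^ μ * μ.factorial)⁻¹ * sinh x ^ ((μ : ℝ) + 1 / 2) := by rw [hsinh]

end LegE

section Gamma

theorem norm_Gamma_le_Gamma_re {s : ℂ} (hs : 0 < s.re) : ‖Complex.Gamma s‖ ≤ Gamma s.re := by
  rw [Complex.Gamma_eq_integral hs, Gamma_eq_integral hs, Complex.GammaIntegral]
  refine MeasureTheory.norm_integral_le_of_norm_le (GammaIntegral_convergent hs)
    (MeasureTheory.ae_restrict_of_forall_mem measurableSet_Ioi fun y hy => ?_)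
  rw [norm_mul, Complex.norm_cpow_eq_rpow_re_of_pos hy, Complex.norm_real,
    Real.norm_of_nonneg (exp_pos _).le, Complex.sub_re, Complex.one_re]

theorem Gamma_one_half_add_nat_le (n : ℕ) : Gamma (1 / 2 + n) ≤ √π * n.factorial := by
  induction n with
  | zero => simp [Gamma_one_half_eq, -one_div]
  | succ n ih =>
    calc Gamma (1 / 2 + (n + 1 : ℕ)) = (1 / 2 + n) * Gamma (1 / 2 + n) := by
          rw [Nat.cast_succ, ← add_assoc, Gamma_add_one (by positivity)]
      _ ≤ (n + 1) * (√π * n.factorial) := by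
          refine mul_le_mul ?_ ih (Gamma_pos_of_pos (by positivity)).le (by positivity)
          linarith
      _ = √π * (n + 1).factorial := by
          rw [Nat.factorial_succ]
          push_cast
          ring

theorem norm_Gamma_one_half_add_I_mul_sq (k : ℝ) :
    ‖Complex.Gamma (1 / 2 + Complex.I * k)‖ ^ 2 = π / cosh (π * k) := by
  have hconj : 1 - (1 / 2 + Complex.I * k) = starRingEnd ℂ (1 / 2 + Complex.I * k) := by
    simp only [map_add, map_mul, map_div₀, map_one, map_ofNat, Complex.conj_I, Complex.conj_ofReal]
    ring
  have hsin : Complex.sin (π * (1 / 2 + Complex.I * k)) = (cosh (π * k) : ℝ) := by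
    rw [show (π : ℂ) * (1 / 2 + Complex.I * k) = (π * k : ℝ) * Complex.I + π / 2 by
      push_cast; ring, Complex.sin_add_pi_div_two, Complex.cos_mul_I, Complex.ofReal_cosh]
  have hreflect := Complex.Gamma_mul_Gamma_one_sub (1 / 2 + Complex.I * k)
  rw [hconj, Complex.Gamma_conj, Complex.mul_conj', hsin] at hreflect
  exact_mod_cast hreflect

theorem norm_Gamma_one_half_add_I_mul_le {k : ℝ} (hk : π ≤ (1 / 4 + k ^ 2) * cosh (π * k)) :
    ‖Complex.Gamma (1 / 2 + Complex.I * k)‖ ≤ ‖-(1 / 2 : ℂ) + Complex.I * k‖ := by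
  have hnorm : ‖-(1 / 2 : ℂ) + Complex.I * k‖ ^ 2 = 1 / 4 + k ^ 2 := by
    have hre : (-(1 / 2 : ℂ) + Complex.I * k).re = -(1 / 2) := by simp
    have him : (-(1 / 2 : ℂ) + Complex.I * k).im = k := by simp
    rw [← Complex.normSq_eq_norm_sq, Complex.normSq_apply, hre, him]
    ring
  refine (sq_le_sq₀ (norm_nonneg _) (norm_nonneg _)).mp ?_
  rwa [norm_Gamma_one_half_add_I_mul_sq, hnorm, div_le_iff₀ (cosh_pos _)]

theorem norm_Gamma_one_half_add_nat_le {μ : ℕ} {k : ℝ}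
    (h : π ≤ (1 / 4 + k ^ 2) * cosh (π * k) ∨ 1 ≤ μ) :
    ‖Complex.Gamma (1 / 2 + μ + Complex.I * k)‖ ≤
      ‖-(1 / 2 : ℂ) - μ + Complex.I * k‖ * ((2 : ℝ) ^ μ * μ.factorial) := by
  rcases Nat.eq_zero_or_pos μ with rfl | hμ
  · simpa [-one_div] using norm_Gamma_one_half_add_I_mul_le (h.resolve_right (by norm_num))
  have hμ' : (1 : ℝ) ≤ μ := by exact_mod_cast hμ
  have hre : (1 / 2 + μ + Complex.I * k : ℂ).re = 1 / 2 + μ := by simp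
  have hnorm : 1 ≤ ‖-(1 / 2 : ℂ) - μ + Complex.I * k‖ := by
    have hre_neg : (-(1 / 2 : ℂ) - μ + Complex.I * k).re = -(1 / 2 + μ) := by
      simp [sub_eq_add_neg, add_comm]
    have habs := Complex.abs_re_le_norm (-(1 / 2 : ℂ) - μ + Complex.I * k)
    rw [hre_neg, abs_neg, abs_of_pos (by positivity)] at habs
    linarith
  have hsqrt : √π ≤ 2 := by
    rw [sqrt_le_left (by norm_num)]
    linarith [pi_lt_four]
  calc ‖Complex.Gamma (1 / 2 + μ + Complex.I * k)‖
      ≤ Gamma (1 / 2 + μ) := hre ▸ norm_Gamma_le_Gamma_re (by rw [hre]; positivity)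
    _ ≤ √π * μ.factorial := Gamma_one_half_add_nat_le μ
    _ ≤ 2 ^ μ * μ.factorial := by
        gcongr
        exact hsqrt.trans (le_self_pow₀ one_le_two hμ.ne')
    _ ≤ ‖-(1 / 2 : ℂ) - μ + Complex.I * k‖ * (2 ^ μ * μ.factorial) :=
        le_mul_of_one_le_left (by positivity) hnorm

theorem pi_le_mul_cosh_of_one_le {k : ℝ} (hk : 1 ≤ k) :
    π ≤ (1 / 4 + k ^ 2) * cosh (π * k) :=
  calc π ≤ π * k := le_mul_of_one_le_right pi_pos.le hk
    _ ≤ cosh (π * k) := (self_le_sinh_iff.mpr (by positivity)).trans (sinh_lt_cosh _).le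
    _ ≤ (1 / 4 + k ^ 2) * cosh (π * k) :=
        le_mul_of_one_le_left (cosh_pos _).le (by nlinarith)

end Gamma

/-- For `μ = 0`, dividing the inequality by `√(sinh x)` and letting `x → 0` gives exactly the
condition on `k`. -/
theorem legendre_pointwise_bound_general {μ : ℕ} {x k : ℝ} (hx : 0 ≤ x)
    (h : π ≤ (1 / 4 + k ^ 2) * cosh (π * k) ∨ 1 ≤ μ) :
    ‖Complex.Gamma (1 / 2 + μ + Complex.I * k) /
        Complex.Gamma (1 / 2 - μ + Complex.I * k)‖ * ‖legE k μ x‖ ≤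
      sinh x ^ ((μ : ℝ) + 1 / 2) / ‖Complex.Gamma (-(1 / 2) - μ + Complex.I * k)‖ := by
  set w : ℂ := -(1 / 2) - μ + Complex.I * k with hw
  have hre : w.re = -(1 / 2 + μ) := by simp [hw, sub_eq_add_neg, add_comm]
  have hw0 : w ≠ 0 := fun h0 => by
    rw [h0, Complex.zero_re] at hre
    linarith [μ.cast_nonneg (α := ℝ)]
  set C : ℝ := 2 ^ μ * μ.factorial
  have hC : 0 < C := by positivity
  have hshift : (1 / 2 - μ + Complex.I * k : ℂ) = w + 1 := by rw [hw]; ring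
  calc ‖Complex.Gamma (1 / 2 + μ + Complex.I * k) /
          Complex.Gamma (1 / 2 - μ + Complex.I * k)‖ * ‖legE k μ x‖
      = ‖Complex.Gamma (1 / 2 + μ + Complex.I * k)‖ * ‖legE k μ x‖ / ‖w‖ / ‖Complex.Gamma w‖ := by
        rw [hshift, Complex.Gamma_add_one w hw0, norm_div, norm_mul, div_mul_eq_mul_div, div_div]
    _ ≤ ‖w‖ * C * (C⁻¹ * sinh x ^ ((μ : ℝ) + 1 / 2)) / ‖w‖ / ‖Complex.Gamma w‖ := by
        gcongr
        · exact norm_Gamma_one_half_add_nat_le h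
        · exact norm_legE_le k μ hx
    _ = sinh x ^ ((μ : ℝ) + 1 / 2) / ‖Complex.Gamma w‖ := by field_simp

/-- `|√(sinh x) 𝖯^{μ}_{ik-1/2}(cosh x)| ≤ (sinh x)^{μ+1/2} / |Γ(ik - 1/2 - μ)|`
for `k ≥ 1` (or any `k > 0` if `μ ≥ 1`). -/
theorem legendre_pointwise_bound (μ : ℕ) (x k : ℝ) (hx : 0 < x) (hk : 0 < k)
    (h : 1 ≤ k ∨ 1 ≤ μ) :
    ‖Complex.Gamma (1 / 2 + μ + Complex.I * k) /
        Complex.Gamma (1 / 2 - μ + Complex.I * k)‖ * ‖legE k μ x‖ ≤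
      Real.sinh x ^ ((μ : ℝ) + 1 / 2) /
        ‖Complex.Gamma (-(1 / 2) - μ + Complex.I * k)‖ := by
  exact legendre_pointwise_bound_general hx.le (h.imp_left pi_le_mul_cosh_of_one_le)
end

section
/- Let a, b, c ∈ ℂ, none of which is a nonpositive integer. Then, as the natural number n tends to infinity, ((a)ₙ·(b)ₙ)/((c)ₙ·n!) ∼ (Γ(c)/(Γ(a)Γ(b)))·n^{a+b−c−1}; that is, the quotient of the left-hand side by the right-hand side tends to 1, where n^{w} := exp(w·log n) for complex w. -/
open Filter

open Asymptotics
open scoped Nat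

/-!
Euler's limit formula `n ^ s * n! / (s)ₙ₊₁ → Γ(s)`, together with `(s)ₙ₊₁ = (s)ₙ * (s + n)` and
`s + n ∼ n`, gives `(s)ₙ ∼ n ^ (s - 1) * n! / Γ(s)`. In the product of these equivalences for `a`
and `b`, divided by the one for `c` and by `n!`, all factorials cancel.
-/

lemma ascPochhammer_eval_eq_prod_range {R : Type*} [CommSemiring R] (n : ℕ) (r : R) :
    (ascPochhammer R n).eval r = ∏ j ∈ Finset.range n, (r + j) := by
  induction n with
  | zero => simp
  | succ n ih => rw [ascPochhammer_succ_eval, ih, Finset.prod_range_succ]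

lemma natCast_cpow_eq_exp_mul_log {n : ℕ} (hn : n ≠ 0) (w : ℂ) :
    (n : ℂ) ^ w = Complex.exp (w * (Real.log n : ℂ)) := by
  rw [Complex.cpow_def_of_ne_zero (Nat.cast_ne_zero.mpr hn), Complex.natCast_log, mul_comm]

lemma GammaSeq_eq_div_ascPochhammer_eval {n : ℕ} (hn : n ≠ 0) (s : ℂ) :
    Complex.GammaSeq s n =
      (n : ℂ) ^ (s - 1) * n ! / (ascPochhammer ℂ n).eval s * (n / (n + s)) := by
  have hn' : (n : ℂ) ≠ 0 := Nat.cast_ne_zero.mpr hn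
  rw [Complex.GammaSeq, ← ascPochhammer_eval_eq_prod_range, ascPochhammer_succ_eval,
    Complex.cpow_sub _ _ hn', Complex.cpow_one, add_comm s]
  field_simp

section

variable {a b c s : ℂ}

lemma ascPochhammer_eval_isEquivalent (hs : ∀ m : ℕ, s ≠ -(m : ℂ)) :
    (fun n : ℕ ↦ (ascPochhammer ℂ n).eval s) ~[atTop]
      fun n ↦ (n : ℂ) ^ (s - 1) * n ! / Complex.Gamma s := by
  have GammaSeq_isEquivalent : Complex.GammaSeq s ~[atTop] fun _ ↦ Complex.Gamma s :=
    (isEquivalent_const_iff_tendsto (Complex.Gamma_ne_zero hs)).mpr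
      (Complex.GammaSeq_tendsto_Gamma s)
  have ratio_isEquivalent_one : (fun n : ℕ ↦ (n : ℂ) / (n + s)) ~[atTop] fun _ ↦ (1 : ℂ) :=
    (isEquivalent_const_iff_tendsto one_ne_zero).mpr (tendsto_natCast_div_add_atTop s)
  have quotient_isEquivalent :=
    ((IsEquivalent.refl (u := fun n : ℕ ↦ (n : ℂ) ^ (s - 1) * n !)).mul
      ratio_isEquivalent_one).div GammaSeq_isEquivalent
  refine (quotient_isEquivalent.congr_left ?_).congr_right (.of_forall fun n ↦ by simp)
  filter_upwards [eventually_ne_atTop 0] with n hn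
  have hn' : (n : ℂ) ≠ 0 := Nat.cast_ne_zero.mpr hn
  have hfac : (n ! : ℂ) ≠ 0 := Nat.cast_ne_zero.mpr n.factorial_ne_zero
  have hns : (n : ℂ) + s ≠ 0 := fun h ↦ hs n (eq_neg_of_add_eq_zero_right h)
  have hpow : (n : ℂ) ^ (s - 1) ≠ 0 := by simp [Complex.cpow_eq_zero_iff, hn']
  simp only [Pi.mul_apply, Pi.div_apply, GammaSeq_eq_div_ascPochhammer_eval hn]
  field_simp

lemma ascPochhammer_ratio_isEquivalent (ha : ∀ m : ℕ, a ≠ -(m : ℂ))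
    (hb : ∀ m : ℕ, b ≠ -(m : ℂ)) (hc : ∀ m : ℕ, c ≠ -(m : ℂ)) :
    (fun n : ℕ ↦ (ascPochhammer ℂ n).eval a * (ascPochhammer ℂ n).eval b /
        ((ascPochhammer ℂ n).eval c * n !)) ~[atTop]
      fun n ↦ Complex.Gamma c / (Complex.Gamma a * Complex.Gamma b) *
        (n : ℂ) ^ (a + b - c - 1) := by
  have ratio_isEquivalent :=
    ((ascPochhammer_eval_isEquivalent ha).mul (ascPochhammer_eval_isEquivalent hb)).div
      ((ascPochhammer_eval_isEquivalent hc).mul (.refl (u := fun n : ℕ ↦ (n ! : ℂ))))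
  refine ratio_isEquivalent.congr_right ?_
  filter_upwards [eventually_ne_atTop 0] with n hn
  have hn' : (n : ℂ) ≠ 0 := Nat.cast_ne_zero.mpr hn
  have hfac : (n ! : ℂ) ≠ 0 := Nat.cast_ne_zero.mpr n.factorial_ne_zero
  have cpow_split : (n : ℂ) ^ (a + b - c - 1) =
      (n : ℂ) ^ (a - 1) * (n : ℂ) ^ (b - 1) / (n : ℂ) ^ (c - 1) := by
    rw [← Complex.cpow_add _ _ hn', ← Complex.cpow_sub _ _ hn']
    ring_nf
  simp only [Pi.mul_apply, Pi.div_apply, cpow_split]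
  field_simp

end

/-- Asymptotics of hypergeometric coefficients: if none of `a, b, c` is a nonpositive
integer, then `((a)ₙ (b)ₙ)/((c)ₙ n!) ∼ (Γ(c)/(Γ(a)Γ(b))) n^{a+b-c-1}` as `n → ∞`,
where `n^w = exp(w log n)`. -/
theorem pochhammer_ratio_asymptotic (a b c : ℂ)
    (ha : ∀ m : ℕ, a ≠ -(m : ℂ)) (hb : ∀ m : ℕ, b ≠ -(m : ℂ))
    (hc : ∀ m : ℕ, c ≠ -(m : ℂ)) :
    Tendsto
      (fun n : ℕ =>
        ((ascPochhammer ℂ n).eval a * (ascPochhammer ℂ n).eval b /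
            ((ascPochhammer ℂ n).eval c * (n.factorial : ℂ))) /
          (Complex.Gamma c / (Complex.Gamma a * Complex.Gamma b) *
            Complex.exp ((a + b - c - 1) * (Real.log n : ℂ))))
      atTop (nhds 1) := by
  have hconst : Complex.Gamma c / (Complex.Gamma a * Complex.Gamma b) ≠ 0 :=
    div_ne_zero (Complex.Gamma_ne_zero hc)
      (mul_ne_zero (Complex.Gamma_ne_zero ha) (Complex.Gamma_ne_zero hb))
  refine (isEquivalent_iff_tendsto_one (.of_forall fun n ↦
    mul_ne_zero hconst (Complex.exp_ne_zero _))).mp ?_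
  refine (ascPochhammer_ratio_isEquivalent ha hb hc).congr_right ?_
  filter_upwards [eventually_ne_atTop 0] with n hn
  rw [natCast_cpow_eq_exp_mul_log hn]
end
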